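/- For real s ≥ 3, ζ ∈ [0,s] and ξ ∈ [0,2s], define h_s(ζ,ξ) = (2ζ − ζ²/s) + (ξ − ξ²/(4s)) · ((1 − ζ/s)² − (1 − ζ/s)^{s−1}). Then h_s(ζ,ξ) ≥ ζ, and for each fixed ζ ≥ 0 and ξ ≥ 0, h_s(ζ,ξ) → h(ζ,ξ) := 2ζ + ξ(1 − e^{−ζ}) as s → ∞. -/

import Mathlib

/-! With `z = 1 - ζ / s ∈ [0, 1]`, the exponent `s - 1 ≥ 2` gives `z ^ (s - 1) ≤ z ^ 2`, and
`ξ ^ 2 / (4 * s) ≤ ξ`, so the second summand of `h_s` is nonnegative, while `ζ ^ 2 / s ≤ ζ` bounds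
the first below by `ζ`. The limit follows termwise from `(1 - ζ / s) ^ s → exp (-ζ)`. -/

open Real Set Filter

/-- `h_s(ζ,ξ) = (2ζ − ζ²/s) + (ξ − ξ²/(4s)) · ((1 − ζ/s)² − (1 − ζ/s)^(s−1))`, arising from
the change of variables `z = 1 − ζ/s` in the rescaled scattering integral. -/
noncomputable def hS (s ζ ξ : ℝ) : ℝ :=
  (2 * ζ - ζ ^ 2 / s) + (ξ - ξ ^ 2 / (4 * s)) * ((1 - ζ / s) ^ 2 - (1 - ζ / s) ^ (s - 1))

/-- For `s ≥ 3`, `ζ ∈ [0,s]`, `ξ ∈ [0,2s]` one has `h_s(ζ,ξ) ≥ ζ`; and for fixed `ζ ≥ 0`,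
`ξ ≥ 0`, `h_s(ζ,ξ) → h(ζ,ξ) = 2ζ + ξ(1 − e^(−ζ))` as `s → ∞`. -/
theorem stmt15 :
    (∀ s : ℝ, 3 ≤ s → ∀ ζ ∈ Icc (0:ℝ) s, ∀ ξ ∈ Icc (0:ℝ) (2 * s), ζ ≤ hS s ζ ξ) ∧
    (∀ ζ ξ : ℝ, 0 ≤ ζ → 0 ≤ ξ →
      Tendsto (fun s : ℝ => hS s ζ ξ) atTop
        (nhds (2 * ζ + ξ * (1 - Real.exp (-ζ))))) := by
  constructor
  · intro s hs ζ hζ ξ hξ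
    obtain ⟨hζ0, hζs⟩ := hζ
    obtain ⟨hξ0, hξs⟩ := hξ
    have hs0 : 0 < s := by linarith
    have hz0 : 0 ≤ 1 - ζ / s := by
      rw [sub_nonneg, div_le_one hs0]; exact hζs
    have hz1 : 1 - ζ / s ≤ 1 := by
      have : 0 ≤ ζ / s := by positivity
      linarith
    have hpow : (1 - ζ / s) ^ (s - 1) ≤ (1 - ζ / s) ^ 2 := by
      rw [← Real.rpow_two]
      exact Real.rpow_le_rpow_of_exponent_ge' hz0 hz1 (by norm_num) (by linarith)
    have h1 : ζ ^ 2 / s ≤ ζ := by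
      rw [div_le_iff₀ hs0]; nlinarith
    have h2 : ξ ^ 2 / (4 * s) ≤ ξ := by
      rw [div_le_iff₀ (by linarith)]; nlinarith
    have h3 := mul_nonneg (sub_nonneg.2 h2) (sub_nonneg.2 hpow)
    unfold hS
    linarith
  · intro ζ ξ _ _
    have hdiv : ∀ c : ℝ, Tendsto (fun s : ℝ => c / s) atTop (nhds 0) := fun c =>
      tendsto_const_nhds.div_atTop tendsto_id
    have hz : Tendsto (fun s : ℝ => 1 - ζ / s) atTop (nhds 1) := by
      simpa using (hdiv ζ).const_sub 1
    have hexp : Tendsto (fun s : ℝ => (1 - ζ / s) ^ s) atTop (nhds (Real.exp (-ζ))) := by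
      simpa [neg_div, ← sub_eq_add_neg] using Real.tendsto_one_add_div_rpow_exp (-ζ)
    -- Replacing the exponent `s` by `s - 1` costs a factor `1 - ζ / s → 1`; the identity needs
    -- the base to be positive, which holds for large `s`.
    have hpow : Tendsto (fun s : ℝ => (1 - ζ / s) ^ (s - 1)) atTop (nhds (Real.exp (-ζ))) := by
      have h := hexp.div hz one_ne_zero
      rw [div_one] at h
      refine h.congr' ?_
      filter_upwards [hz.eventually (lt_mem_nhds one_pos)] with s hs
      exact (Real.rpow_sub_one hs.ne' s).symm
    have hξ : Tendsto (fun s : ℝ => ξ ^ 2 / (4 * s)) atTop (nhds 0) := by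
      exact (hdiv (ξ ^ 2 / 4)).congr fun s => div_div (ξ ^ 2) 4 s
    have h := ((hdiv (ζ ^ 2)).const_sub (2 * ζ)).add
      ((hξ.const_sub ξ).mul ((hz.pow 2).sub hpow))
    simpa [hS] using h
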